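/- For every abelian-group k-parameter x, the group G_x is ℵ_1-free; that is, every countable subgroup of G_x is a free abelian group. -/

import Mathlib

open Cardinal

namespace Sh883

/-- A "restricted tuple": the result of replacing the `m`-th coordinate of a `(k+1)`-tuple
of functions `ℕ → S` by a finite sequence (list) of elements of `S`, keeping the other
coordinates. -/
structure Res (k : ℕ) (S : Type u) where
  m : Fin (k + 1)
  seq : List S
  rest : (l : Fin (k + 1)) → l ≠ m → ℕ → S

/-- `η̄↾⟨m,n⟩` : replace the `m`-th coordinate of `η̄` by the finite sequence
`⟨η_m(0), …, η_m(n-1)⟩`. -/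
def restrictAt {k : ℕ} {S : Type u} (η : Fin (k + 1) → ℕ → S) (m : Fin (k + 1)) (n : ℕ) :
    Res k S :=
  ⟨m, List.ofFn fun i : Fin n => η m i, fun l _ => η l⟩

/-- `Λ_m = {η̄↾⟨m,n⟩ : η̄ ∈ Λ, n ∈ ℕ}`. -/
def LambdaResAt {k : ℕ} {S : Type u} (Λ : Set (Fin (k + 1) → ℕ → S)) (m : Fin (k + 1)) :
    Set (Res k S) :=
  {ν | ∃ η ∈ Λ, ∃ n : ℕ, ν = restrictAt η m n}

/-- `Λ_0 ∪ … ∪ Λ_k`. -/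
def LambdaRes {k : ℕ} {S : Type u} (Λ : Set (Fin (k + 1) → ℕ → S)) : Set (Res k S) :=
  ⋃ m, LambdaResAt Λ m

/-- The generators of the group `G_x`: `x_ν` for `ν ∈ Λ_0 ∪ … ∪ Λ_k`, `y_{η̄,n}` for
`η̄ ∈ Λ`, `n ∈ ℕ`, and `z`. -/
inductive Gen (k : ℕ) (S : Type u) (Λ : Set (Fin (k + 1) → ℕ → S)) : Type u where
  | X : ↥(LambdaRes Λ) → Gen k S Λ
  | Y : ↥Λ → ℕ → Gen k S Λ
  | Z : Gen k S Λ

/-- `η̄↾⟨m,n⟩` as an element of `Λ_0 ∪ … ∪ Λ_k`, for `η̄ ∈ Λ`. -/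
def resMem {k : ℕ} {S : Type u} {Λ : Set (Fin (k + 1) → ℕ → S)} (η : ↥Λ) (m : Fin (k + 1))
    (n : ℕ) : ↥(LambdaRes Λ) :=
  ⟨restrictAt (η : Fin (k + 1) → ℕ → S) m n, Set.mem_iUnion.2 ⟨m, (η : _), η.2, n, rfl⟩⟩

/-- The relation element `n!·y_{η̄,n+1} − y_{η̄,n} − a(η̄,n)·z − Σ_{m≤k} x_{η̄↾⟨m,n⟩}`. -/
def relEl {k : ℕ} {S : Type u} {Λ : Set (Fin (k + 1) → ℕ → S)} (a : ↥Λ → ℕ → ℤ)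
    (η : ↥Λ) (n : ℕ) : FreeAbelianGroup (Gen k S Λ) :=
  (n.factorial : ℤ) • FreeAbelianGroup.of (Gen.Y η (n + 1))
    - FreeAbelianGroup.of (Gen.Y η n)
    - a η n • FreeAbelianGroup.of Gen.Z
    - ∑ m : Fin (k + 1), FreeAbelianGroup.of (Gen.X (resMem η m n))

/-- The subgroup of relations. -/
def relSub {k : ℕ} {S : Type u} {Λ : Set (Fin (k + 1) → ℕ → S)} (a : ↥Λ → ℕ → ℤ) :
    AddSubgroup (FreeAbelianGroup (Gen k S Λ)) :=
  AddSubgroup.closure {g | ∃ (η : ↥Λ) (n : ℕ), g = relEl a η n}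

/-- The group `G_x` of the abelian-group `k`-parameter `x = (S, Λ, a)`. -/
abbrev Gx {k : ℕ} {S : Type u} {Λ : Set (Fin (k + 1) → ℕ → S)} (a : ↥Λ → ℕ → ℤ) : Type u :=
  FreeAbelianGroup (Gen k S Λ) ⧸ relSub a

end Sh883

theorem free_sub_aux {ι : Type*} [LinearOrder ι] [WellFoundedLT ι] (N : Submodule ℤ (ι →₀ ℤ)) :
    Module.Free ℤ N := by
  classical
  let L : ι → Submodule ℤ (ι →₀ ℤ) := fun i => N ⊓ Finsupp.supported ℤ ℤ (Set.Iic i)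
  have hd : ∀ i, ∃ n ∈ L i, ∀ x ∈ L i, ∃ c : ℤ, x i = c * n i := by
    intro i
    let I : Ideal ℤ := (L i).map (Finsupp.lapply i)
    have hg := Submodule.IsPrincipal.generator_mem I
    obtain ⟨n, hn, hni⟩ := Submodule.mem_map.1 hg
    refine ⟨n, hn, fun x hx => ?_⟩
    have hxI : x i ∈ I := Submodule.mem_map.2 ⟨x, hx, rfl⟩
    obtain ⟨c, hc⟩ := (Submodule.IsPrincipal.mem_iff_eq_smul_generator I).1 hxI
    refine ⟨c, ?_⟩
    rw [hc, ← hni]; rfl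
  choose n hn hdiv using hd
  have hsup : ∀ i j, i < j → n i j = 0 := by
    intro i j hij
    by_contra h
    have := (hn i).2
    exact absurd ((Finsupp.mem_supported _ _).1 this (Finsupp.mem_support_iff.2 h)) (not_le.2 hij)
  let J := {i : ι // n i i ≠ 0}
  let v : J → N := fun i => ⟨n i.1, (hn i.1).1⟩
  have hli : LinearIndependent ℤ v := by
    rw [linearIndependent_iff]
    intro l hl
    by_contra hne
    have hs : l.support.Nonempty := Finsupp.support_nonempty_iff.2 hne
    let i := l.support.max' hs
    have hi : i ∈ l.support := Finset.max'_mem _ _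
    have h1 : ((Finsupp.linearCombination ℤ v l : N) : ι →₀ ℤ) i.1 = 0 := by rw [hl]; rfl
    rw [Finsupp.linearCombination_apply, Finsupp.sum] at h1
    have h2 : ∑ j ∈ l.support, l j * n j.1 i.1 = 0 := by
      refine Eq.trans ?_ h1
      simp [v, Finsupp.finset_sum_apply]
    rw [Finset.sum_eq_single i] at h2
    · rcases mul_eq_zero.1 h2 with h | h
      · exact (Finsupp.mem_support_iff.1 hi) h
      · exact i.2 h
    · intro j hj hji
      have : j < i := lt_of_le_of_ne (Finset.le_max' _ _ hj) hji
      rw [hsup j.1 i.1 this, mul_zero]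
    · intro h; exact absurd hi h
  have key : ∀ i, ∀ x (hx : x ∈ L i), (⟨x, hx.1⟩ : N) ∈ Submodule.span ℤ (Set.range v) := by
    intro i
    induction i using WellFoundedLT.induction with
    | ind i ih =>
    intro x hx
    obtain ⟨c, hc⟩ := hdiv i x hx
    have hcn : c • (⟨n i, (hn i).1⟩ : N) ∈ Submodule.span ℤ (Set.range v) ∨ x i = 0 := by
      by_cases h : n i i = 0
      · right; rw [hc, h, mul_zero]
      · left; exact Submodule.smul_mem _ _ (Submodule.subset_span ⟨⟨i, h⟩, rfl⟩)
    have aux : ∀ y (hy : y ∈ L i), y i = 0 → (⟨y, hy.1⟩ : N) ∈ Submodule.span ℤ (Set.range v) := by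
      intro y hy hyi
      by_cases h0 : y = 0
      · subst h0; exact Submodule.zero_mem _
      have hs : y.support.Nonempty := Finsupp.support_nonempty_iff.2 h0
      have hj := Finset.max'_mem _ hs
      have hle : y.support.max' hs ≤ i := (Finsupp.mem_supported _ _).1 hy.2 hj
      refine ih (y.support.max' hs) (lt_of_le_of_ne hle ?_) y ⟨hy.1, ?_⟩
      · intro h; rw [h] at hj; exact Finsupp.mem_support_iff.1 hj hyi
      · refine (Finsupp.mem_supported _ _).2 ?_
        intro j hj; exact Finset.le_max' _ _ hj
    rcases hcn with h | h
    · have hy : x - c • n i ∈ L i := Submodule.sub_mem _ hx (Submodule.smul_mem _ _ (hn i))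
      have := aux _ hy (by simp [hc])
      have h3 := Submodule.add_mem _ this h
      convert h3 using 1
      ext1; simp
    · exact aux x hx h
  refine Module.Free.of_basis (Module.Basis.mk hli ?_)
  rintro ⟨x, hx⟩ -
  by_cases h0 : x = 0
  · subst h0; exact Submodule.zero_mem _
  have hs : x.support.Nonempty := Finsupp.support_nonempty_iff.2 h0
  refine key (x.support.max' hs) x ⟨hx, ?_⟩
  refine (Finsupp.mem_supported _ _).2 ?_
  intro j hj; exact Finset.le_max' _ _ hj

theorem free_of_inj {M N : Type*} [AddCommGroup M] [AddCommGroup N] [Module.Free ℤ M]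
    (f : N →ₗ[ℤ] M) (hf : Function.Injective f) : Module.Free ℤ N := by
  classical
  let b := Module.Free.chooseBasis ℤ M
  letI : LinearOrder (Module.Free.ChooseBasisIndex ℤ M) := linearOrderOfSTO WellOrderingRel
  haveI : WellFoundedLT (Module.Free.ChooseBasisIndex ℤ M) := ⟨WellOrderingRel.isWellOrder.wf⟩
  let g : N →ₗ[ℤ] _ := b.repr.toLinearMap ∘ₗ f
  have hg : Function.Injective g := b.repr.injective.comp hf
  haveI := free_sub_aux (LinearMap.range g)
  exact Module.Free.of_equiv (LinearEquiv.ofInjective g hg).symm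

theorem rec_aux {V : Type*} [AddCommGroup V] (r : ℕ → V) (N : ℕ) :
    ∀ e : ℕ → V, (∀ n, N ≤ n → (n.factorial : ℤ) • e (n+1) = e n + r n) →
    ∃ u : ℕ → V, (∀ n, (n.factorial : ℤ) • u (n+1) = u n + r n) ∧ ∀ n, N ≤ n → u n = e n := by
  induction N with
  | zero => intro e he; exact ⟨e, fun n => he n (Nat.zero_le _), fun _ _ => rfl⟩
  | succ N ih =>
    intro e he
    obtain ⟨u, hu, hue⟩ := ih (Function.update e N ((N.factorial : ℤ) • e (N+1) - r N)) (by
      intro n hn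
      rcases hn.eq_or_lt with rfl | h
      · simp
      · rw [Function.update_of_ne (by omega), Function.update_of_ne (by omega)]
        exact he n h)
    refine ⟨u, hu, fun n hn => ?_⟩
    rw [hue n (by omega), Function.update_of_ne (by omega)]

theorem rec_exists {V : Type*} [AddCommGroup V] [Module ℚ V] (r : ℕ → V) :
    ∃ u : ℕ → V, (∀ n, (n.factorial : ℤ) • u (n+1) = u n + r n) := by
  refine ⟨fun n => Nat.rec 0 (fun n v => ((n.factorial : ℚ)⁻¹) • (v + r n)) n, fun n => ?_⟩
  have h : ((n.factorial : ℕ) : ℚ) ≠ 0 := by exact_mod_cast n.factorial_ne_zero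
  rw [← Int.cast_smul_eq_zsmul ℚ]
  simp only [Int.cast_natCast]
  rw [smul_inv_smul₀ h]

namespace Sh883

theorem resMem_ne {k : ℕ} {S : Type u} {Λ : Set (Fin (k + 1) → ℕ → S)} (η η' : ↥Λ) (h : η ≠ η') :
    ∃ N, ∀ n, N ≤ n → resMem η 0 n ≠ resMem η' 0 n := by
  by_contra hc
  push Not at hc
  apply h
  apply Subtype.ext
  funext l j
  obtain ⟨n, hn, he⟩ := hc (j+1)
  have he := congrArg Subtype.val he
  simp only [resMem, restrictAt, Res.mk.injEq, heq_eq_eq, true_and] at he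
  obtain ⟨h1, h2⟩ := he
  by_cases hl : l = 0
  · subst hl
    have := congrFun (List.ofFn_injective h1) ⟨j, by omega⟩
    exact this
  · exact congrFun (congrFun (congrFun h2 l) hl) j

theorem resMem_m {k : ℕ} {S : Type u} {Λ : Set (Fin (k + 1) → ℕ → S)} {η η' : ↥Λ} {m m' n n'}
    (h : resMem η m n = resMem η' m' n') : m = m' ∧ n = n' := by
  have he := congrArg Subtype.val h
  have h1 := congrArg Res.m he
  have h2 := congrArg (fun r => List.length (Res.seq r)) he
  simpa [resMem, restrictAt] using And.intro h1 h2

/-- elimination bounds -/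
theorem exists_N {k : ℕ} {S : Type u} {Λ : Set (Fin (k + 1) → ℕ → S)} (T : Set ↥Λ)
    (hT : T.Countable) : ∃ N : ↥Λ → ℕ, ∀ η ∈ T, ∀ η' ∈ T, ∀ n n', N η ≤ n → N η' ≤ n' →
      resMem η 0 n = resMem η' 0 n' → η = η' ∧ n = n' := by
  classical
  obtain ⟨f, hf⟩ := Set.countable_iff_exists_injOn.1 hT
  have hN : ∀ η : ↥Λ, ∃ N, ∀ η' ∈ T, f η' < f η → ∀ n, N ≤ n → resMem η 0 n ≠ resMem η' 0 n := by
    intro η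
    have hfin : {η' ∈ T | f η' < f η}.Finite :=
      Set.Finite.of_injOn (f := f) (t := Set.Iio (f η)) (fun x hx => hx.2)
        (fun x hx y hy => hf hx.1 hy.1) (Set.finite_Iio _)
    have hg : ∀ η' : ↥Λ, ∃ N, η ≠ η' → ∀ n, N ≤ n → resMem η 0 n ≠ resMem η' 0 n := by
      intro η'
      by_cases h : η = η'
      · exact ⟨0, fun h' => absurd h h'⟩
      · obtain ⟨N, hN⟩ := resMem_ne η η' h
        exact ⟨N, fun _ => hN⟩
    choose g hg using hg
    refine ⟨hfin.toFinset.sup g, fun η' hη' hlt n hn => hg η' ?_ n (le_trans ?_ hn)⟩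
    · rintro rfl; exact lt_irrefl _ hlt
    · exact Finset.le_sup (f := g) (by simpa using ⟨hη', hlt⟩)
  choose N hN using hN
  refine ⟨N, fun η hη η' hη' n n' hn hn' h => ?_⟩
  obtain ⟨-, rfl⟩ := resMem_m h
  refine ⟨?_, rfl⟩
  rcases lt_trichotomy (f η) (f η') with hl | hl | hl
  · exact absurd h.symm (hN η' η hη hl n hn')
  · exact hf hη hη' hl
  · exact absurd h (hN η η' hη' hl n hn)

/-- Image of a generator. -/
def gm {k : ℕ} {S : Type u} {Λ : Set (Fin (k + 1) → ℕ → S)} (a : ↥Λ → ℕ → ℤ) (g : Gen k S Λ) :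
    Gx a := QuotientAddGroup.mk (FreeAbelianGroup.of g)

theorem gm_rel {k : ℕ} {S : Type u} {Λ : Set (Fin (k + 1) → ℕ → S)} (a : ↥Λ → ℕ → ℤ)
    (η : ↥Λ) (n : ℕ) : (n.factorial : ℤ) • gm a (Gen.Y η (n+1)) = gm a (Gen.Y η n) +
      (a η n • gm a Gen.Z + ∑ m, gm a (Gen.X (resMem η m n))) := by
  have h : QuotientAddGroup.mk' (relSub a) (relEl a η n) = 0 :=
    (QuotientAddGroup.eq_zero_iff _).2 (AddSubgroup.subset_closure ⟨η, n, rfl⟩)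
  simp only [relEl, map_sub, map_zsmul, map_sum] at h
  have h' : (n.factorial : ℤ) • gm a (Gen.Y η (n+1)) - gm a (Gen.Y η n) -
      a η n • gm a Gen.Z - ∑ m, gm a (Gen.X (resMem η m n)) = 0 := h
  rw [← sub_eq_zero, ← h']; abel

theorem exists_hom {k : ℕ} {S : Type u} {Λ : Set (Fin (k + 1) → ℕ → S)} (a : ↥Λ → ℕ → ℤ)
    {V : Type*} [AddCommGroup V] (val : Gen k S Λ → V)
    (h : ∀ η n, (n.factorial : ℤ) • val (Gen.Y η (n+1)) = val (Gen.Y η n) +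
      (a η n • val Gen.Z + ∑ m, val (Gen.X (resMem η m n)))) :
    ∃ φ : Gx a →ₗ[ℤ] V, ∀ g, φ (gm a g) = val g := by
  refine ⟨(QuotientAddGroup.lift (relSub a) (FreeAbelianGroup.lift val) ?_).toIntLinearMap, ?_⟩
  · rw [relSub, AddSubgroup.closure_le]
    rintro _ ⟨η, n, rfl⟩
    change FreeAbelianGroup.lift val (relEl a η n) = 0
    simp only [relEl, map_sub, map_zsmul, map_sum, FreeAbelianGroup.lift_apply_of]
    rw [h]; abel
  · intro g
    simp [gm]

theorem exists_countable {k : ℕ} {S : Type u} {Λ : Set (Fin (k + 1) → ℕ → S)} (a : ↥Λ → ℕ → ℤ)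
    (x : Gx a) : ∃ T : Set ↥Λ, T.Countable ∧ ∀ P : Submodule ℤ (Gx a), gm a Gen.Z ∈ P →
      (∀ ν, gm a (Gen.X ν) ∈ P) → (∀ η ∈ T, ∀ n, gm a (Gen.Y η n) ∈ P) → x ∈ P := by
  obtain ⟨x, rfl⟩ := QuotientAddGroup.mk_surjective x
  induction x using FreeAbelianGroup.induction_on with
  | zero => exact ⟨∅, Set.countable_empty, fun P _ _ _ => P.zero_mem⟩
  | of g =>
    cases g with
    | X ν => exact ⟨∅, Set.countable_empty, fun P _ h _ => h ν⟩
    | Y η n => exact ⟨{η}, Set.countable_singleton _, fun P _ _ h => h η rfl n⟩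
    | Z => exact ⟨∅, Set.countable_empty, fun P h _ _ => h⟩
  | neg g ih =>
    obtain ⟨T, hT, h⟩ := ih
    exact ⟨T, hT, fun P h1 h2 h3 => P.neg_mem (h P h1 h2 h3)⟩
  | add x y ihx ihy =>
    obtain ⟨T, hT, h⟩ := ihx
    obtain ⟨T', hT', h'⟩ := ihy
    exact ⟨T ∪ T', hT.union hT', fun P h1 h2 h3 => P.add_mem
      (h P h1 h2 fun η hη => h3 η (Or.inl hη)) (h' P h1 h2 fun η hη => h3 η (Or.inr hη))⟩

/-- The generators which form the basis. -/
def Good {k : ℕ} {S : Type u} {Λ : Set (Fin (k + 1) → ℕ → S)} (T : Set ↥Λ) (N : ↥Λ → ℕ) :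
    Gen k S Λ → Prop
  | Gen.X ν => ¬ ∃ p : ↥Λ × ℕ, p.1 ∈ T ∧ N p.1 ≤ p.2 ∧ ν = resMem p.1 0 p.2
  | Gen.Y η n => η ∈ T ∧ N η ≤ n
  | Gen.Z => True

theorem good_li {k : ℕ} {S : Type u} {Λ : Set (Fin (k + 1) → ℕ → S)} (a : ↥Λ → ℕ → ℤ)
    (T : Set ↥Λ) (N : ↥Λ → ℕ) (hN : ∀ η ∈ T, ∀ η' ∈ T, ∀ n n', N η ≤ n → N η' ≤ n' →
      resMem η 0 n = resMem η' 0 n' → η = η' ∧ n = n') :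
    LinearIndependent ℤ (fun g : {g : Gen k S Λ // Good T N g} => gm a g.1) := by
  classical
  let e : Gen k S Λ → (Gen k S Λ →₀ ℚ) := fun g => Finsupp.single g 1
  let w : ↥(LambdaRes Λ) → (Gen k S Λ →₀ ℚ) := fun ν =>
    if h : ∃ p : ↥Λ × ℕ, p.1 ∈ T ∧ N p.1 ≤ p.2 ∧ ν = resMem p.1 0 p.2 then
      (h.choose.2.factorial : ℤ) • e (Gen.Y h.choose.1 (h.choose.2+1)) - e (Gen.Y h.choose.1 h.choose.2)
      - a h.choose.1 h.choose.2 • e Gen.Z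
      - ∑ m : Fin k, e (Gen.X (resMem h.choose.1 m.succ h.choose.2))
    else e (Gen.X ν)
  have hw1 : ∀ η ∈ T, ∀ n, N η ≤ n → w (resMem η 0 n) = (n.factorial : ℤ) • e (Gen.Y η (n+1)) -
      e (Gen.Y η n) - a η n • e Gen.Z - ∑ m : Fin k, e (Gen.X (resMem η m.succ n)) := by
    intro η hη n hn
    have h : ∃ p : ↥Λ × ℕ, p.1 ∈ T ∧ N p.1 ≤ p.2 ∧ resMem η 0 n = resMem p.1 0 p.2 :=
      ⟨(η, n), hη, hn, rfl⟩
    have hc := h.choose_spec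
    obtain ⟨h1, h2⟩ := hN η hη _ hc.1 n _ hn hc.2.1 hc.2.2
    simp only [w]
    rw [dif_pos h, ← h1, ← h2]
  have hw2 : ∀ ν, Good T N (Gen.X ν) → w ν = e (Gen.X ν) := by
    intro ν hν
    exact dif_neg hν
  have hw3 : ∀ η (m : Fin k) n, w (resMem η m.succ n) = e (Gen.X (resMem η m.succ n)) := by
    intro η m n
    apply hw2
    rintro ⟨p, -, -, hp⟩
    exact Fin.succ_ne_zero _ (resMem_m hp).1
  have hy : ∀ η, ∃ u : ℕ → (Gen k S Λ →₀ ℚ), (∀ n, (n.factorial : ℤ) • u (n+1) = u n +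
      (a η n • e Gen.Z + ∑ m, w (resMem η m n))) ∧ (η ∈ T → ∀ n, N η ≤ n → u n = e (Gen.Y η n)) := by
    intro η
    by_cases hη : η ∈ T
    · obtain ⟨u, hu, hu'⟩ := rec_aux (fun n => a η n • e Gen.Z + ∑ m, w (resMem η m n)) (N η)
        (fun n => e (Gen.Y η n)) (by
          intro n hn
          simp only [Fin.sum_univ_succ, hw3]
          rw [hw1 η hη n hn]
          abel)
      exact ⟨u, hu, fun _ => hu'⟩
    · obtain ⟨u, hu⟩ := rec_exists (fun n => a η n • e Gen.Z + ∑ m, w (resMem η m n))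
      exact ⟨u, hu, fun h => absurd h hη⟩
  choose u hu hu' using hy
  obtain ⟨φ, hφ⟩ := exists_hom a (fun g => match g with
    | Gen.X ν => w ν
    | Gen.Y η n => u η n
    | Gen.Z => e Gen.Z) (fun η n => hu η n)
  apply LinearIndependent.of_comp φ
  have heq : (φ ∘ fun g : {g : Gen k S Λ // Good T N g} => gm a g.1) = fun g => e g.1 := by
    funext g
    obtain ⟨g, hg⟩ := g
    simp only [Function.comp, hφ]
    cases g with
    | X ν => exact hw2 ν hg
    | Y η n => exact hu' η hg.1 n hg.2
    | Z => rfl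
  rw [heq]
  have h1 : LinearIndependent ℚ e := Finsupp.linearIndependent_single_one ℚ _
  have h2 : LinearIndependent ℤ e := h1.restrict_scalars (by
    intro x y hxy
    simpa using hxy)
  exact h2.comp _ Subtype.val_injective

theorem good_span {k : ℕ} {S : Type u} {Λ : Set (Fin (k + 1) → ℕ → S)} (a : ↥Λ → ℕ → ℤ)
    (T : Set ↥Λ) (N : ↥Λ → ℕ) (P : Submodule ℤ (Gx a)) (hP : ∀ g, Good T N g → gm a g ∈ P) :
    gm a Gen.Z ∈ P ∧ (∀ ν, gm a (Gen.X ν) ∈ P) ∧ (∀ η ∈ T, ∀ n, gm a (Gen.Y η n) ∈ P) := by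
  have hZ : gm a Gen.Z ∈ P := hP _ trivial
  have hX : ∀ ν, gm a (Gen.X ν) ∈ P := by
    intro ν
    by_cases h : Good T N (Gen.X ν)
    · exact hP _ h
    · obtain ⟨⟨η, n⟩, h1, h2, rfl⟩ := not_not.1 h
      have hr := gm_rel a η n
      rw [Fin.sum_univ_succ] at hr
      have : gm a (Gen.X (resMem η 0 n)) = (n.factorial : ℤ) • gm a (Gen.Y η (n+1)) -
          gm a (Gen.Y η n) - a η n • gm a Gen.Z - ∑ m : Fin k, gm a (Gen.X (resMem η m.succ n)) := by
        rw [hr]; abel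
      simp only at h1 h2 ⊢
      rw [this]
      refine P.sub_mem (P.sub_mem (P.sub_mem (P.smul_mem _ (hP _ ⟨h1, by omega⟩)) (hP _ ⟨h1, h2⟩))
        (P.smul_mem _ hZ)) (P.sum_mem fun m _ => hP _ ?_)
      rintro ⟨p, -, -, hp⟩
      exact Fin.succ_ne_zero _ (resMem_m hp).1
  refine ⟨hZ, hX, fun η hη n => ?_⟩
  have hd : ∀ d n, N η ≤ n + d → gm a (Gen.Y η n) ∈ P := by
    intro d
    induction d with
    | zero => intro n hn; exact hP _ ⟨hη, hn⟩
    | succ d ih =>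
      intro n hn
      have hr := gm_rel a η n
      rw [← sub_eq_iff_eq_add] at hr
      rw [← hr]
      exact P.sub_mem (P.smul_mem _ (ih (n+1) (by omega)))
        (P.add_mem (P.smul_mem _ hZ) (P.sum_mem fun m _ => hX _))
  exact hd (N η) n (by omega)

end Sh883

open Sh883 in
/-- For every abelian-group `k`-parameter `x`, the group `G_x` is
`ℵ₁`-free: every subgroup of cardinality less than `ℵ₁` (i.e. every countable subgroup)
is a free abelian group. -/
theorem stmt4 {k : ℕ} {S : Type u} (Λ : Set (Fin (k + 1) → ℕ → S)) (a : ↥Λ → ℕ → ℤ) :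
    ∀ H : AddSubgroup (Gx a), #H < Cardinal.aleph 1 → Module.Free ℤ H := by
  intro H hH
  have hc : Countable H := Cardinal.mk_le_aleph0_iff.1 (Cardinal.lt_aleph_one_iff.1 hH)
  choose T hT hT' using exists_countable a
  have hU : (⋃ h : H, T h.1).Countable := Set.countable_iUnion fun h => hT h.1
  obtain ⟨N, hN⟩ := exists_N _ hU
  have hli := good_li a _ N hN
  obtain ⟨hZ, hX, hY⟩ := good_span a (⋃ h : H, T h.1) N (Submodule.span ℤ (Set.range
    (fun g : {g : Gen k S Λ // Good (⋃ h : H, T h.1) N g} => gm a g.1)))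
    (fun g hg => Submodule.subset_span ⟨⟨g, hg⟩, rfl⟩)
  haveI := Module.Free.of_basis (Module.Basis.span hli)
  have hle : AddSubgroup.toIntSubmodule H ≤ Submodule.span ℤ (Set.range
      (fun g : {g : Gen k S Λ // Good (⋃ h : H, T h.1) N g} => gm a g.1)) := by
    intro x hx
    exact hT' x _ hZ hX fun η hη n => hY η (Set.mem_iUnion.2 ⟨⟨x, hx⟩, hη⟩) n
  exact free_of_inj (N := AddSubgroup.toIntSubmodule H) (Submodule.inclusion hle)
    (Submodule.inclusion_injective hle)
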